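/- arXiv:math/0401395 — 4 statements merged into one kernel-verified Lean document; each statement's English description precedes it below -/
import Mathlib

section
/- The linear map 𝒜 : H → E × F, 𝒜u = (Au, Tu), is Fredholm if and only if the induced map A_T : ker T → E is Fredholm and the image of T has finite codimension in F (i.e. the quotient F/im T is finite-dimensional). -/
/-- A linear map between vector spaces over `K` is Fredholm if its kernel is
finite-dimensional and its image has finite codimension. -/
def IsFredholm (K : Type*) [Field K] {V W : Type*} [AddCommGroup V] [Module K V]
    [AddCommGroup W] [Module K W] (f : V →ₗ[K] W) : Prop :=
  FiniteDimensional K (LinearMap.ker f) ∧ FiniteDimensional K (W ⧸ LinearMap.range f)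

/-- 𝒜 : H → E × F, 𝒜u = (Au, Tu), is Fredholm if and only if the induced
map A_T : ker T → E is Fredholm and the image of T has finite codimension in F. -/
theorem isFredholm_prod_iff {K H E F : Type*} [Field K]
    [AddCommGroup H] [Module K H] [AddCommGroup E] [Module K E]
    [AddCommGroup F] [Module K F] (A : H →ₗ[K] E) (T : H →ₗ[K] F) :
    IsFredholm K (A.prod T) ↔
      IsFredholm K (A.domRestrict (LinearMap.ker T)) ∧
        FiniteDimensional K (F ⧸ LinearMap.range T) := by
  have hk : FiniteDimensional K (LinearMap.ker (A.prod T)) ↔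
      FiniteDimensional K (LinearMap.ker (A.domRestrict (LinearMap.ker T))) := by
    have e : LinearMap.ker (A.prod T) =
        (LinearMap.ker (A.domRestrict (LinearMap.ker T))).map (LinearMap.ker T).subtype := by
      ext x
      simp [and_comm]
    rw [e]
    exact (Module.Finite.equiv_iff (Submodule.equivMapOfInjective _
      (LinearMap.ker T).injective_subtype _)).symm
  have hi : LinearMap.range (A.domRestrict (LinearMap.ker T)) ≤
      (LinearMap.range (A.prod T)).comap (LinearMap.inl K E F) := by
    rintro _ ⟨⟨u, hu⟩, rfl⟩
    exact ⟨u, by simpa using hu⟩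
  have hg : LinearMap.range (A.prod T) ≤
      (LinearMap.range T).comap (LinearMap.snd K E F) := by
    rintro _ ⟨u, rfl⟩
    exact ⟨u, rfl⟩
  let i := Submodule.mapQ _ _ _ hi
  let g := Submodule.mapQ _ _ _ hg
  have hinj : Function.Injective i := by
    rw [injective_iff_map_eq_zero]
    intro x
    obtain ⟨e, rfl⟩ := Submodule.mkQ_surjective _ x
    intro h
    have h' : LinearMap.inl K E F e ∈ LinearMap.range (A.prod T) :=
      (Submodule.Quotient.mk_eq_zero _).1 h
    obtain ⟨u, hu⟩ := h'
    have h1 : A u = e := congrArg Prod.fst hu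
    have h2 : T u = 0 := congrArg Prod.snd hu
    exact (Submodule.Quotient.mk_eq_zero _).2 ⟨⟨u, h2⟩, h1⟩
  have hsurj : Function.Surjective g := by
    intro x
    obtain ⟨f, rfl⟩ := Submodule.mkQ_surjective _ x
    exact ⟨Submodule.Quotient.mk (0, f), rfl⟩
  have hker : LinearMap.ker g ≤ LinearMap.range i := by
    intro x
    obtain ⟨⟨e, f⟩, rfl⟩ := Submodule.mkQ_surjective _ x
    intro h
    have h' : f ∈ LinearMap.range T := (Submodule.Quotient.mk_eq_zero _).1 h
    obtain ⟨u, rfl⟩ := h'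
    refine ⟨Submodule.Quotient.mk (e - A u), ?_⟩
    refine (Submodule.Quotient.eq _).2 ⟨-u, ?_⟩
    simp
  unfold IsFredholm
  rw [hk, and_assoc]
  refine and_congr_right fun _ => ⟨fun h => ⟨?_, ?_⟩, fun ⟨h1, h2⟩ => ?_⟩
  · exact Module.Finite.of_injective i hinj
  · exact Module.Finite.of_surjective g hsurj
  · refine ⟨Submodule.fg_of_fg_map_of_fg_inf_ker g ?_ ?_⟩
    · exact IsNoetherian.noetherian _
    · rw [top_inf_eq]
      have : FiniteDimensional K (LinearMap.ker g) := Submodule.finiteDimensional_of_le hker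
      exact Module.Finite.iff_fg.1 this
end

section
/- Suppose the linear map 𝒜 : H → E × F, 𝒜u = (Au, Tu), is Fredholm (equivalently, the induced map A_T : ker T → E is Fredholm and F/im T is finite-dimensional). Then the indices satisfy ind 𝒜 = ind A_T − dim(F/im T), as an identity of integers. -/
/-- The index of a (Fredholm) linear map: dim ker f − dim (W / im f), as an integer. -/
noncomputable def fredholmIndex (K : Type*) [Field K] {V W : Type*} [AddCommGroup V]
    [Module K V] [AddCommGroup W] [Module K W] (f : V →ₗ[K] W) : ℤ :=
  (Module.finrank K (LinearMap.ker f) : ℤ) -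
    (Module.finrank K (W ⧸ LinearMap.range f) : ℤ)

/-- If 𝒜 : H → E × F, 𝒜u = (Au, Tu), is Fredholm, then
ind 𝒜 = ind A_T − dim(F / im T). -/
theorem fredholmIndex_prod {K H E F : Type*} [Field K]
    [AddCommGroup H] [Module K H] [AddCommGroup E] [Module K E]
    [AddCommGroup F] [Module K F] (A : H →ₗ[K] E) (T : H →ₗ[K] F)
    (h : IsFredholm K (A.prod T)) :
    fredholmIndex K (A.prod T) =
      fredholmIndex K (A.domRestrict (LinearMap.ker T)) -
        (Module.finrank K (F ⧸ LinearMap.range T) : ℤ) := by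
  obtain ⟨_, h2⟩ := h
  have hk : Module.finrank K (LinearMap.ker (A.prod T)) =
      Module.finrank K (LinearMap.ker (A.domRestrict (LinearMap.ker T))) := by
    have e : (LinearMap.ker (A.domRestrict (LinearMap.ker T))).map (LinearMap.ker T).subtype =
        LinearMap.ker (A.prod T) := by
      ext x
      simp [Submodule.mem_map, LinearMap.mem_ker, and_comm]
    rw [← e]
    exact (Submodule.equivMapOfInjective _ (Submodule.subtype_injective _) _).finrank_eq.symm
  have hi : LinearMap.range (A.domRestrict (LinearMap.ker T)) ≤
      (LinearMap.range (A.prod T)).comap (LinearMap.inl K E F) := by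
    rintro _ ⟨⟨u, hu⟩, rfl⟩
    exact ⟨u, Prod.ext rfl hu⟩
  have hp : LinearMap.range (A.prod T) ≤
      (LinearMap.range T).comap (LinearMap.snd K E F) := by
    rintro _ ⟨u, rfl⟩
    exact ⟨u, rfl⟩
  let i := Submodule.mapQ _ _ _ hi
  let p := Submodule.mapQ _ _ _ hp
  have hinj : Function.Injective i := by
    rw [injective_iff_map_eq_zero]
    intro x
    obtain ⟨e, rfl⟩ := Submodule.Quotient.mk_surjective _ x
    intro hx
    obtain ⟨u, hu⟩ := (Submodule.Quotient.mk_eq_zero _).1 hx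
    exact (Submodule.Quotient.mk_eq_zero _).2
      ⟨⟨u, congrArg Prod.snd hu⟩, congrArg Prod.fst hu⟩
  have hsurj : Function.Surjective p := by
    intro x
    obtain ⟨f, rfl⟩ := Submodule.Quotient.mk_surjective _ x
    exact ⟨Submodule.Quotient.mk (0, f), rfl⟩
  have hex : LinearMap.ker p = LinearMap.range i := by
    ext x
    obtain ⟨⟨e, f⟩, rfl⟩ := Submodule.Quotient.mk_surjective _ x
    constructor
    · intro hx
      obtain ⟨u, hu⟩ := (Submodule.Quotient.mk_eq_zero _).1 hx
      refine ⟨Submodule.Quotient.mk (e - A u), ?_⟩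
      refine (Submodule.Quotient.eq _).2 ⟨-u, ?_⟩
      have hu' : T u = f := hu
      ext <;> simp [hu']
    · rintro ⟨y, hy⟩
      obtain ⟨e', rfl⟩ := Submodule.Quotient.mk_surjective _ y
      rw [LinearMap.mem_ker, ← hy]
      exact (Submodule.Quotient.mk_eq_zero _).2 (Submodule.zero_mem _)
  have hr := LinearMap.finrank_range_add_finrank_ker p
  rw [hex, LinearMap.finrank_range_of_inj hinj, LinearMap.range_eq_top.2 hsurj,
    finrank_top] at hr
  unfold fredholmIndex
  rw [hk, ← hr]
  push_cast
  ring
end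

section
/- Let f : V → W be a Fredholm linear map and let U be a subspace of V such that the restriction f|_U : U → W is also Fredholm. Then U has finite codimension in V, and dim(V/U) = ind f − ind(f|_U), as an identity of integers. -/
/-- If f : V → W is Fredholm and its restriction to a subspace U is also
Fredholm, then U has finite codimension in V and dim(V/U) = ind f − ind (f|_U). -/
theorem finiteCodim_of_fredholm_restrict {K V W : Type*} [Field K]
    [AddCommGroup V] [Module K V] [AddCommGroup W] [Module K W]
    (f : V →ₗ[K] W) (U : Submodule K V)
    (hf : IsFredholm K f) (hfU : IsFredholm K (f.domRestrict U)) :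
    FiniteDimensional K (V ⧸ U) ∧
      (Module.finrank K (V ⧸ U) : ℤ) =
        fredholmIndex K f - fredholmIndex K (f.domRestrict U) := by
  obtain ⟨h1, h2⟩ := hf
  obtain ⟨h3, h4⟩ := hfU
  unfold fredholmIndex
  have hle : LinearMap.range (f.domRestrict U) ≤ LinearMap.range f := by
    rintro _ ⟨x, rfl⟩
    exact ⟨x, rfl⟩
  have hUc : U ≤ (LinearMap.range (f.domRestrict U)).comap f := fun x hx => ⟨⟨x, hx⟩, rfl⟩
  -- The exact sequence 0 → ker f|U → ker f → V/U → W/f(U) → W/f(V) → 0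
  let a : LinearMap.ker (f.domRestrict U) →ₗ[K] LinearMap.ker f :=
    LinearMap.codRestrict _ (U.subtype ∘ₗ (LinearMap.ker (f.domRestrict U)).subtype)
      (fun x => x.2)
  let b : LinearMap.ker f →ₗ[K] (V ⧸ U) := U.mkQ ∘ₗ (LinearMap.ker f).subtype
  let c : (V ⧸ U) →ₗ[K] (W ⧸ LinearMap.range (f.domRestrict U)) := U.mapQ _ f hUc
  let d : (W ⧸ LinearMap.range (f.domRestrict U)) →ₗ[K] (W ⧸ LinearMap.range f) :=
    Submodule.factor hle
  have ha : Function.Injective a := by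
    intro x y h
    apply Subtype.ext
    apply Subtype.ext
    exact congrArg (fun z : LinearMap.ker f => (z : V)) h
  have hab : LinearMap.ker b = LinearMap.range a := by
    ext x
    constructor
    · intro hx
      have hxU : (x : V) ∈ U := (Submodule.Quotient.mk_eq_zero U).1 hx
      exact ⟨⟨⟨x, hxU⟩, x.2⟩, rfl⟩
    · rintro ⟨y, rfl⟩
      exact (Submodule.Quotient.mk_eq_zero U).2 y.1.2
  have hbc : LinearMap.ker c = LinearMap.range b := by
    ext x
    constructor
    · obtain ⟨v, rfl⟩ := U.mkQ_surjective x
      intro hx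
      have hv : f v ∈ LinearMap.range (f.domRestrict U) :=
        (Submodule.Quotient.mk_eq_zero _).1 hx
      obtain ⟨u, hu⟩ := hv
      have hu' : f u = f v := hu
      refine ⟨⟨v - u, by simp [hu']⟩, ?_⟩
      refine (Submodule.Quotient.eq U).2 ?_
      simp
    · rintro ⟨y, rfl⟩
      refine (Submodule.Quotient.mk_eq_zero _).2 ?_
      have hy : f (y : V) = 0 := y.2
      change f (y : V) ∈ _
      rw [hy]
      exact zero_mem _
  have hcd : LinearMap.ker d = LinearMap.range c := by
    ext x
    constructor
    · obtain ⟨w, rfl⟩ := Submodule.mkQ_surjective _ x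
      intro hx
      have hw : w ∈ LinearMap.range f := (Submodule.Quotient.mk_eq_zero _).1 hx
      obtain ⟨v, rfl⟩ := hw
      exact ⟨U.mkQ v, rfl⟩
    · rintro ⟨y, rfl⟩
      obtain ⟨v, rfl⟩ := U.mkQ_surjective y
      exact (Submodule.Quotient.mk_eq_zero _).2 ⟨v, rfl⟩
  have hd : LinearMap.range d = ⊤ := LinearMap.range_eq_top.2 (Submodule.factor_surjective hle)
  have hfin : FiniteDimensional K (V ⧸ U) := by
    have hk : Module.Finite K (LinearMap.ker c) := by
      rw [hbc]
      infer_instance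
    have hq : Module.Finite K ((V ⧸ U) ⧸ LinearMap.ker c) :=
      Module.Finite.equiv c.quotKerEquivRange.symm
    exact Module.Finite.of_submodule_quotient (LinearMap.ker c)
  refine ⟨hfin, ?_⟩
  have e1 := b.finrank_range_add_finrank_ker
  have e2 := c.finrank_range_add_finrank_ker
  have e3 := d.finrank_range_add_finrank_ker
  have e4 := LinearMap.finrank_range_of_inj ha
  rw [hab] at e1
  rw [hbc] at e2
  rw [hcd, hd, finrank_top] at e3
  omega
end

section
/- Let V be a vector space over K and let R : V → V be a linear map of the form R = U + N, where U : V → V is a bijective linear map and N : V → V is a linear map with finite-dimensional range. If R is injective, then R is bijective. -/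
/-- If R = U + N with U bijective linear and N of finite-dimensional range,
and R is injective, then R is bijective. -/
theorem bijective_of_injective_finiteRank_perturbation {K V : Type*} [Field K]
    [AddCommGroup V] [Module K V] (R U N : V →ₗ[K] V)
    (hR : R = U + N) (hU : Function.Bijective U)
    (hN : FiniteDimensional K (LinearMap.range N))
    (hinj : Function.Injective R) :
    Function.Bijective R := by
  refine ⟨hinj, ?_⟩
  let e := LinearEquiv.ofBijective U hU
  have hUe : ∀ v, U (e.symm v) = v := fun v => e.apply_symm_apply v
  let T : V →ₗ[K] V := R ∘ₗ e.symm.toLinearMap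
  have hT : ∀ v, T v = v + N (e.symm v) := by
    intro v
    change R (e.symm v) = _
    rw [hR, LinearMap.add_apply, hUe]
  have hTinj : Function.Injective T := hinj.comp e.symm.injective
  have hW : ∀ w ∈ LinearMap.range N, T w ∈ LinearMap.range N := by
    intro w hw
    rw [hT]
    exact Submodule.add_mem _ hw ⟨_, rfl⟩
  have hSinj : Function.Injective (T.restrict hW) := by
    intro a b hab
    exact Subtype.ext (hTinj (congrArg Subtype.val hab))
  have hS := LinearMap.injective_iff_surjective.mp hSinj
  intro v
  obtain ⟨w, hw⟩ := hS ⟨N (e.symm v), ⟨_, rfl⟩⟩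
  have hw' : T w = N (e.symm v) := congrArg Subtype.val hw
  refine ⟨e.symm (v - w), ?_⟩
  change T (v - w) = v
  rw [map_sub, hw', hT, add_sub_cancel_right]
end
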